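/- Let t, N, K be integers with 1 ≤ t ≤ K and K > N ≥ 3, and define α_t = K(K − t)/((t+1)(tN − 1)) − N(K − 1)/(tN − 1) and β_t = N − N/K − (K − t)/((t+1)(tN − 1)) + N(K − 1)/(K(tN − 1)). Then N(1 − N/(2K)) ≤ α_t·((N−1)/K) + β_t. In other words, at cache capacity M = (N−1)/K the delivery rate N(1 − N/(2K)) of the proposed scheme is at most the delivery rate R_{M,t} = α_t M + β_t of every memory-sharing line of the Maddah-Ali–Niesen–Chen scheme. -/

import Mathlib

/-- The quadratic in `K` governing the comparison is nonnegative at integers: its discriminant is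
nonpositive for `t ≥ 2`, and for `t = 1` it has the consecutive integer roots `N` and `N + 1`. -/
theorem rate_gap_numerator_nonneg (t N K : ℤ) (ht : 1 ≤ t) (hNK : N < K) (hN : 3 ≤ N) :
    0 ≤ 2 * K * (K - t) - 2 * N * (K - 1) * (t + 1) + N * (t + 1) * (t * N - 1) := by
  rcases ht.eq_or_lt with rfl | ht
  · have h : 0 ≤ (K - N) * (K - N - 1) := mul_nonneg (by linarith) (by linarith)
    linarith
  · have hN' : 3 ≤ N * (N - 2) := by nlinarith
    have ht' : 4 ≤ t ^ 2 := by nlinarith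
    have h : 0 ≤ (t ^ 2 - 1) * (N * (N - 2) - 3) :=
      mul_nonneg (by linarith) (by linarith)
    linarith [sq_nonneg (2 * K - t - N * (t + 1))]

/-- For integers `1 ≤ t ≤ K` and `K > N ≥ 3`, at cache capacity `M = (N−1)/K`
the delivery rate `N(1 − N/(2K))` of the proposed scheme is at most the rate
`α_t·M + β_t` of every memory-sharing line of the MNC scheme. -/
theorem stmt_8 (t N K : ℤ) (ht : 1 ≤ t) (htK : t ≤ K) (hNK : N < K) (hN : 3 ≤ N)
    (α β : ℝ)
    (hα : α = (K : ℝ) * ((K : ℝ) - (t : ℝ)) / (((t : ℝ) + 1) * ((t : ℝ) * (N : ℝ) - 1))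
        - (N : ℝ) * ((K : ℝ) - 1) / ((t : ℝ) * (N : ℝ) - 1))
    (hβ : β = (N : ℝ) - (N : ℝ) / (K : ℝ)
        - ((K : ℝ) - (t : ℝ)) / (((t : ℝ) + 1) * ((t : ℝ) * (N : ℝ) - 1))
        + (N : ℝ) * ((K : ℝ) - 1) / ((K : ℝ) * ((t : ℝ) * (N : ℝ) - 1))) :
    (N : ℝ) * (1 - (N : ℝ) / (2 * (K : ℝ))) ≤ α * (((N : ℝ) - 1) / (K : ℝ)) + β := by
  have hP : (0 : ℝ) ≤ 2 * K * (K - t) - 2 * N * (K - 1) * (t + 1) + N * (t + 1) * (t * N - 1) :=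
    mod_cast rate_gap_numerator_nonneg t N K ht hNK hN
  have ht' : (1 : ℝ) ≤ t := mod_cast ht
  have hN' : (3 : ℝ) ≤ N := mod_cast hN
  have hNK' : (N : ℝ) < K := mod_cast hNK
  have hK : (0 : ℝ) < K := by linarith
  have hD : (0 : ℝ) < t * N - 1 := by nlinarith
  have hT : (0 : ℝ) < t + 1 := by linarith
  have hgap : α * (((N : ℝ) - 1) / K) + β - N * (1 - N / (2 * K)) =
      (N - 2) * (2 * K * (K - t) - 2 * N * (K - 1) * (t + 1) + N * (t + 1) * (t * N - 1)) /
        (2 * K * (t + 1) * (t * N - 1)) := by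
    rw [hα, hβ]
    have := hK.ne'
    have := hD.ne'
    have := hT.ne'
    field_simp
    ring
  have hnonneg := div_nonneg (mul_nonneg (by linarith : (0 : ℝ) ≤ N - 2) hP)
    (by positivity : (0 : ℝ) ≤ 2 * K * (t + 1) * (t * N - 1))
  linarith
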